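/- For all (t,x) ∈ [0,T)×ℝ, almost surely limsup_{u↓0} (X^{t,x}_u − x)/√(2u·ln(ln(1/u))) = 1 and liminf_{u↓0} (X^{t,x}_u − x)/√(2u·ln(ln(1/u))) = −1. (Law of the iterated logarithm for the time-dependent Ornstein–Uhlenbeck process, Lemma 3.2.) -/

import Mathlib

/-!
The drift term of `X` is `O(u)` as `u ↓ 0`, because its integrand is continuous on a compact
interval, while the normalisation `√(2u log log (1/u))` dominates `√u`. Hence the claim reduces
to the law of the iterated logarithm at `0` for the Brownian motion `W`
(`lil_of_perturbation`), which is proved here from the definition.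

* Upper half (`lil_upper`): Doob's inequality for the submartingale `exp (l W)` and path
  continuity give `P (sup_{s ≤ t} W_s > a) ≤ exp (-a² / 2t)` (`max_ineq`); the first
  Borel–Cantelli lemma along `t = q^n`, with `q` just below `1`, concludes.
* Lower half (`lil_lower`): the increments over `[q^(n+1), q^n]` are independent and their tails
  are bounded below by a multiple of `1/n`, so by the second Borel–Cantelli lemma
  (`frequently_incr`) they are infinitely often almost as large as the normalisation at `q^n`.
  The remaining term `W (q^(n+1))` is controlled by the upper half for `-W`, and `q → 0`.

The statements for the limit inferior follow by applying both halves to `-W`.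
-/

open MeasureTheory ProbabilityTheory Set Filter

/-- A standard Brownian motion on `[0,∞)`: strongly measurable coordinates, starts at `0`,
a.s. continuous paths, Gaussian increments `W_t − W_s ∼ N(0, t−s)`, and increments
independent of the past. -/
structure IsBrownianMotion {Ω : Type*} [MeasurableSpace Ω] (P : Measure Ω)
    (W : ℝ → Ω → ℝ) : Prop where
  stronglyMeasurable : ∀ s : ℝ, StronglyMeasurable (W s)
  init : ∀ ω, W 0 ω = 0
  cont : ∀ᵐ ω ∂P, Continuous fun s => W s ω
  gaussian_incr : ∀ s t : ℝ, 0 ≤ s → s ≤ t →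
    P.map (fun ω => W t ω - W s ω) = gaussianReal 0 (Real.toNNReal (t - s))
  indep_incr : ∀ s t : ℝ, 0 ≤ s → s ≤ t →
    Indep (MeasurableSpace.comap (fun ω => W t ω - W s ω) inferInstance)
      (⨆ u ∈ Set.Iic s, MeasurableSpace.comap (W u) inferInstance) P

/-! ### Gaussian maximal inequality -/

/-- The σ-algebra generated by the path of `W` up to time `s`, exactly as it appears in
`IsBrownianMotion.indep_incr` (negative times included). -/
abbrev pastSigma {Ω : Type*} (W : ℝ → Ω → ℝ) (s : ℝ) : MeasurableSpace Ω :=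
  ⨆ u ∈ Set.Iic s, MeasurableSpace.comap (W u) inferInstance

lemma pastSigma_mono {Ω : Type*} (W : ℝ → Ω → ℝ) : Monotone (pastSigma W) := fun _ _ h =>
  biSup_mono fun _ hu => le_trans hu h

lemma measurable_pastSigma {Ω : Type*} (W : ℝ → Ω → ℝ) {u s : ℝ} (h : u ≤ s) :
    Measurable[pastSigma W s] (W u) :=
  measurable_iff_comap_le.2 (le_iSup₂ (f := fun u (_ : u ∈ Set.Iic s) =>
    MeasurableSpace.comap (W u) inferInstance) u h)

namespace IsBrownianMotion

variable {Ω : Type*} [mΩ : MeasurableSpace Ω] {P : Measure Ω} {W : ℝ → Ω → ℝ}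

lemma meas (hW : IsBrownianMotion P W) (s : ℝ) : Measurable (W s) :=
  (hW.stronglyMeasurable s).measurable

lemma meas_incr (hW : IsBrownianMotion P W) (s t : ℝ) : Measurable fun ω => W t ω - W s ω :=
  (hW.meas t).sub (hW.meas s)

lemma pastSigma_le (hW : IsBrownianMotion P W) (s : ℝ) : pastSigma W s ≤ mΩ :=
  iSup₂_le fun u _ => (hW.meas u).comap_le

lemma neg (hW : IsBrownianMotion P W) : IsBrownianMotion P (fun s ω => - W s ω) where
  stronglyMeasurable s := (hW.stronglyMeasurable s).neg
  init ω := by simp [hW.init]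
  cont := by filter_upwards [hW.cont] with ω h using h.neg
  gaussian_incr s t hs hst := by
    have h : (fun ω => -W t ω - -W s ω) = (fun x => -x) ∘ fun ω => W t ω - W s ω := by
      ext ω; simp; ring
    rw [h, ← Measure.map_map (g := fun x : ℝ => -x) (f := fun ω => W t ω - W s ω)
      measurable_neg ((hW.meas t).sub (hW.meas s)), hW.gaussian_incr s t hs hst, gaussianReal_map_neg, neg_zero]
  indep_incr s t hs hst := by
    refine indep_of_indep_of_le_left (indep_of_indep_of_le_right (hW.indep_incr s t hs hst) ?_) ?_
    · refine iSup₂_mono fun u _ => ?_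
      exact (measurable_neg.comp (comap_measurable (W u))).comap_le
    · have h : (fun ω => -W t ω - -W s ω) = (fun x => -x) ∘ fun ω => W t ω - W s ω := by
        ext ω; simp; ring
      rw [h]
      exact (measurable_neg.comp (comap_measurable _)).comap_le

lemma integrable_exp_incr (hW : IsBrownianMotion P W) {s t : ℝ} (hs : 0 ≤ s) (hst : s ≤ t)
    (l : ℝ) : Integrable (fun ω => Real.exp (l * (W t ω - W s ω))) P := by
  have h := integrable_exp_mul_gaussianReal (μ := 0) (v := Real.toNNReal (t - s)) l
  rw [← hW.gaussian_incr s t hs hst] at h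
  exact h.comp_measurable ((hW.meas t).sub (hW.meas s))

lemma integral_exp_incr (hW : IsBrownianMotion P W) {s t : ℝ} (hs : 0 ≤ s) (hst : s ≤ t)
    (l : ℝ) : ∫ ω, Real.exp (l * (W t ω - W s ω)) ∂P = Real.exp ((t - s) * l ^ 2 / 2) := by
  have h := mgf_gaussianReal (hW.gaussian_incr s t hs hst) l
  rw [Real.coe_toNNReal _ (sub_nonneg.2 hst)] at h
  simpa [mgf] using h

/-- `exp (l W)`, sampled on a grid of mesh `d`, is a submartingale: the conditional expectation
of one more factor is `exp (d l² / 2) ≥ 1`. -/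
lemma submartingale_exp [IsProbabilityMeasure P] (hW : IsBrownianMotion P W) {d : ℝ} (hd : 0 ≤ d)
    (l : ℝ) :
    Submartingale (fun (k : ℕ) ω => Real.exp (l * W (k * d) ω))
      ⟨fun k : ℕ => pastSigma W (k * d), fun _ _ h => pastSigma_mono W (by gcongr),
        fun _ => hW.pastSigma_le _⟩ P := by
  have hint : ∀ k : ℕ, Integrable (fun ω => Real.exp (l * W (k * d) ω)) P := fun k => by
    simpa [hW.init] using hW.integrable_exp_incr le_rfl (show 0 ≤ (k : ℝ) * d by positivity) l
  have hadp : ∀ k : ℕ, StronglyMeasurable[pastSigma W (k * d)]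
      (fun ω => Real.exp (l * W (k * d) ω)) := fun k => by
    refine Measurable.stronglyMeasurable ?_
    exact Real.measurable_exp.comp ((measurable_pastSigma W le_rfl).const_mul l)
  refine submartingale_nat hadp hint fun k => ?_
  have h0 : (0 : ℝ) ≤ k * d := by positivity
  have h1 : (k : ℝ) * d ≤ ((k + 1 : ℕ) : ℝ) * d := by push_cast; nlinarith
  set g : Ω → ℝ := fun ω => Real.exp (l * (W ((k + 1 : ℕ) * d) ω - W (k * d) ω)) with hg
  have hfg : (fun ω => Real.exp (l * W ((k + 1 : ℕ) * d) ω))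
      = (fun ω => Real.exp (l * W (k * d) ω)) * g := by
    ext ω; simp only [hg, Pi.mul_apply, ← Real.exp_add]; ring_nf
  have hgi : Integrable g P := hW.integrable_exp_incr h0 h1 l
  have hpull := condExp_mul_of_stronglyMeasurable_left (μ := P) (hadp k)
    (by rw [← hfg]; exact hint (k + 1)) hgi
  have hind : P[g | pastSigma W (k * d)] =ᵐ[P] fun _ => P[g] :=
    condExp_indep_eq (((hW.meas _).sub (hW.meas _)).comap_le) (hW.pastSigma_le _)
      (Measurable.stronglyMeasurable
        (Real.measurable_exp.comp ((comap_measurable _).const_mul l)))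
      (hW.indep_incr _ _ h0 h1)
  have hEg : 1 ≤ P[g] := by
    rw [hg, hW.integral_exp_incr h0 h1 l]
    refine Real.one_le_exp ?_
    have := sub_nonneg.2 h1
    positivity
  change _ ≤ᵐ[P] P[(fun ω => Real.exp (l * W ((k + 1 : ℕ) * d) ω)) | pastSigma W (k * d)]
  rw [hfg]
  filter_upwards [hpull, hind] with ω h2 h3
  rw [h2, Pi.mul_apply, h3]
  exact le_mul_of_one_le_right (Real.exp_pos _).le hEg

lemma max_ineq_grid [IsProbabilityMeasure P] (hW : IsBrownianMotion P W) {d : ℝ} (hd : 0 ≤ d)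
    {l : ℝ} (hl : 0 ≤ l) (a : ℝ) (n : ℕ) :
    P {ω | ∃ k ≤ n, a ≤ W (k * d) ω} ≤ ENNReal.ofReal (Real.exp (n * d * l ^ 2 / 2 - l * a)) := by
  have hsub := hW.submartingale_exp hd l
  have h := maximal_ineq hsub (fun k ω => (Real.exp_pos _).le)
    (ε := NNReal.mk (Real.exp (l * a)) (Real.exp_pos _).le) n
  set S := {ω | ((NNReal.mk (Real.exp (l * a)) (Real.exp_pos _).le : NNReal) : ℝ) ≤
    (Finset.range (n + 1)).sup' Finset.nonempty_range_add_one
      fun k => Real.exp (l * W (k * d) ω)} with hS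
  have hsubset : {ω | ∃ k ≤ n, a ≤ W (k * d) ω} ⊆ S := by
    rintro ω ⟨k, hk, hak⟩
    simp only [hS, mem_ofPred_eq, NNReal.coe_mk, Finset.le_sup'_iff]
    exact ⟨k, by simpa [Nat.lt_succ_iff] using hk, by gcongr⟩
  have hint : ∫ ω in S, Real.exp (l * W (n * d) ω) ∂P ≤ Real.exp (n * d * l ^ 2 / 2) := by
    have h0 : (0 : ℝ) ≤ n * d := by positivity
    refine (setIntegral_le_integral (hsub.2.2 n)
      (ae_of_all _ fun ω => (Real.exp_pos _).le)).trans ?_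
    have := hW.integral_exp_incr le_rfl h0 l
    simp only [hW.init, sub_zero] at this
    exact this.le
  have h2 : ENNReal.ofReal (Real.exp (l * a)) * P S ≤
      ENNReal.ofReal (Real.exp (n * d * l ^ 2 / 2)) := by
    refine le_trans ?_ (h.trans (ENNReal.ofReal_le_ofReal hint))
    rw [ENNReal.ofReal, Real.toNNReal_of_nonneg (Real.exp_pos _).le]
  refine (measure_mono hsubset).trans ?_
  rw [Real.exp_sub, ENNReal.ofReal_div_of_pos (Real.exp_pos _),
    ENNReal.le_div_iff_mul_le (by simp [Real.exp_pos]) (by simp), mul_comm]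
  exact h2

/-- Gaussian maximal inequality in continuous time. By path continuity the event is contained in
the limit inferior of the corresponding events on the grids of mesh `t / (n + 1)`. -/
lemma max_ineq [IsProbabilityMeasure P] (hW : IsBrownianMotion P W) {t a : ℝ} (ht : 0 < t)
    (ha : 0 ≤ a) :
    P {ω | ∃ s ∈ Icc 0 t, a < W s ω} ≤ ENNReal.ofReal (Real.exp (-(a ^ 2 / (2 * t)))) := by
  set A : ℕ → Set Ω := fun n => {ω | ∃ k ≤ n + 1, a ≤ W (k * (t / (n + 1))) ω} with hA
  have hAle : ∀ n, P (A n) ≤ ENNReal.ofReal (Real.exp (-(a ^ 2 / (2 * t)))) := fun n => by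
    have h := hW.max_ineq_grid (d := t / (n + 1)) (by positivity) (l := a / t) (by positivity) a
      (n + 1)
    refine h.trans (le_of_eq ?_)
    congr 2
    push_cast
    field_simp
    ring
  have hmono : Monotone fun n : ℕ => ⋂ m ≥ n, A m := by
    intro n n' hn
    exact biInter_subset_biInter_left fun m hm => le_trans hn hm
  have hsub : {ω | ∃ s ∈ Icc 0 t, a < W s ω} ≤ᵐ[P] ⋃ n : ℕ, ⋂ m ≥ n, A m := by
    filter_upwards [hW.cont] with ω hc
    rintro ⟨s, ⟨hs0, hst⟩, has⟩
    have hlim : Tendsto (fun n : ℕ => (⌊s / t * (n + 1 : ℝ)⌋₊ : ℝ) * (t / (n + 1))) atTop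
        (nhds s) := by
      have h1 : Tendsto (fun n : ℕ => (n : ℝ) + 1) atTop atTop :=
        tendsto_natCast_atTop_atTop.atTop_add tendsto_const_nhds
      have h2 := (tendsto_nat_floor_mul_div_atTop (R := ℝ) (a := s / t) (by positivity)).comp h1
      have h3 := h2.mul_const t
      rw [div_mul_cancel₀ _ ht.ne'] at h3
      refine h3.congr fun n => ?_
      simp only [Function.comp]
      ring
    have hev : ∀ᶠ n : ℕ in atTop, a < W ((⌊s / t * (n + 1 : ℝ)⌋₊ : ℝ) * (t / (n + 1))) ω :=
      ((hc.tendsto s).comp hlim).eventually (lt_mem_nhds has)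
    obtain ⟨N, hN⟩ := eventually_atTop.1 hev
    refine mem_iUnion.2 ⟨N, mem_iInter₂.2 fun m hm => ⟨_, ?_, (hN m hm).le⟩⟩
    refine Nat.floor_le_of_le ?_
    push_cast
    have : s / t ≤ 1 := (div_le_one ht).2 hst
    have hm0 : (0 : ℝ) ≤ m + 1 := by positivity
    nlinarith
  refine (measure_mono_ae hsub).trans ?_
  rw [hmono.measure_iUnion]
  exact iSup_le fun n => (measure_mono (biInter_subset_of_mem (le_refl n))).trans (hAle n)

end IsBrownianMotion

/-! ### The law of the iterated logarithm for Brownian motion -/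

/-- The normalising function `√(2 u log log (1/u))` of the law of the iterated logarithm at `0`.
It is only meaningful for small `u > 0`; elsewhere it is a nonnegative junk value. -/
noncomputable def lilScale (u : ℝ) : ℝ := Real.sqrt (2 * u * Real.log (Real.log (1 / u)))

lemma lilScale_nonneg (u : ℝ) : 0 ≤ lilScale u := Real.sqrt_nonneg _

lemma log_one_div_pow (q : ℝ) (n : ℕ) : Real.log (1 / q ^ n) = n * Real.log (1 / q) := by
  rw [← one_div_pow, Real.log_pow]

lemma tendsto_logLog : Tendsto (fun u : ℝ => Real.log (Real.log (1 / u)))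
    (nhdsWithin 0 (Ioi 0)) atTop := by
  have h : Tendsto (fun u : ℝ => 1 / u) (nhdsWithin 0 (Ioi 0)) atTop := by
    simpa using tendsto_inv_nhdsGT_zero (𝕜 := ℝ)
  exact Real.tendsto_log_atTop.comp (Real.tendsto_log_atTop.comp h)

lemma tendsto_pow_nhdsGT {q : ℝ} (hq0 : 0 < q) (hq1 : q < 1) :
    Tendsto (fun n : ℕ => q ^ n) atTop (nhdsWithin 0 (Ioi 0)) :=
  tendsto_nhdsWithin_iff.2 ⟨tendsto_pow_atTop_nhds_zero_of_lt_one hq0.le hq1,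
    Eventually.of_forall fun _ => pow_pos hq0 _⟩

namespace IsBrownianMotion

variable {Ω : Type*} [mΩ : MeasurableSpace Ω] {P : Measure Ω} {W : ℝ → Ω → ℝ}

/-- Upper half of the law of the iterated logarithm. With `q = 1 / (1 + ε)`, the event that `W`
exceeds `(1 + ε) √(2 q^(m+1) log (m log (1/q)))` somewhere on `[0, q^m]` has probability at most
`(m log (1/q))^(-(1 + ε))`, which is summable in `m`. -/
lemma lil_upper [IsProbabilityMeasure P] (hW : IsBrownianMotion P W) {ε : ℝ} (hε : 0 < ε) :
    ∀ᵐ ω ∂P, ∀ᶠ u in nhdsWithin 0 (Ioi 0), W u ω ≤ (1 + ε) * lilScale u := by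
  set q : ℝ := 1 / (1 + ε) with hq
  have hq0 : 0 < q := by positivity
  have hq1 : q < 1 := by rw [hq, div_lt_one (by positivity)]; linarith
  have hqε : (1 + ε) * q = 1 := by rw [hq]; field_simp
  set L : ℝ := Real.log (1 / q) with hL
  have hLpos : 0 < L := Real.log_pos (by rw [lt_div_iff₀ hq0]; linarith)
  set a : ℕ → ℝ := fun n => (1 + ε) * Real.sqrt (2 * q ^ (n + 2) * Real.log ((n + 1 : ℕ) * L))
    with ha
  set E : ℕ → Set Ω := fun n => {ω | ∃ s ∈ Icc 0 (q ^ (n + 1)), a n < W s ω} with hE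
  have hPE : ∀ n, P (E n) ≤
      ENNReal.ofReal (((n + 1 : ℕ) : ℝ) ^ (-(1 + ε)) * L ^ (-(1 + ε))) := by
    intro n
    have ht : 0 < q ^ (n + 1) := by positivity
    refine (hW.max_ineq ht (a := a n) (by positivity)).trans (ENNReal.ofReal_le_ofReal ?_)
    have hn : (0 : ℝ) < ((n + 1 : ℕ) : ℝ) := by positivity
    rw [← Real.mul_rpow hn.le hLpos.le, Real.rpow_def_of_pos (by positivity)]
    refine Real.exp_le_exp.2 ?_
    -- `√x ^ 2 ≥ x` also when `x < 0`
    have hsq : 2 * q ^ (n + 2) * Real.log ((n + 1 : ℕ) * L) ≤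
        Real.sqrt (2 * q ^ (n + 2) * Real.log ((n + 1 : ℕ) * L)) ^ 2 := by
      rw [Real.sq_sqrt']; exact le_max_left _ _
    have h1 : Real.log ((n + 1 : ℕ) * L) * (1 + ε) ≤ a n ^ 2 / (2 * q ^ (n + 1)) := by
      rw [le_div_iff₀ (by positivity), ha, mul_pow]
      calc _ = (1 + ε) ^ 2 * (2 * q ^ (n + 2) * Real.log ((n + 1 : ℕ) * L)) := by
            linear_combination (-(1 + ε) * 2 * q ^ (n + 1) * Real.log ((n + 1 : ℕ) * L)) * hqε
        _ ≤ _ := by gcongr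
    linarith
  have hsum : ∑' n, P (E n) ≠ ⊤ := by
    have hs : Summable fun n : ℕ => ((n + 1 : ℕ) : ℝ) ^ (-(1 + ε)) * L ^ (-(1 + ε)) :=
      ((summable_nat_add_iff (f := fun n : ℕ => (n : ℝ) ^ (-(1 + ε))) 1).2
        (Real.summable_nat_rpow.2 (by linarith))).mul_right _
    exact ne_top_of_le_ne_top hs.tsum_ofReal_ne_top (ENNReal.tsum_le_tsum hPE)
  filter_upwards [ae_eventually_notMem hsum] with ω hω
  obtain ⟨N, hN⟩ := eventually_atTop.1 hω
  have hsmall : ∀ᶠ u : ℝ in nhdsWithin 0 (Ioi 0), u ∈ Ioo 0 (q ^ (N + 1)) :=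
    Ioo_mem_nhdsGT (by positivity)
  filter_upwards [hsmall, tendsto_logLog.eventually_ge_atTop 0] with u ⟨hu0, hu1⟩ hll
  have hu1' : u ≤ 1 := hu1.le.trans (pow_le_one₀ hq0.le hq1.le)
  obtain ⟨m, hm1, hm2⟩ := exists_nat_pow_near_of_lt_one hu0 hu1' hq0 hq1
  have hNm : N + 1 < m + 1 := (pow_lt_pow_iff_right_of_lt_one₀ hq0 hq1).1 (hm1.trans hu1)
  obtain ⟨n, rfl⟩ : ∃ n, m = n + 1 := ⟨m - 1, by omega⟩
  have hnot := hN n (by omega)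
  have hWu : W u ω ≤ a n := by
    by_contra hcon
    exact hnot ⟨u, ⟨hu0.le, hm2⟩, not_le.1 hcon⟩
  refine hWu.trans ?_
  have hlog : ((n + 1 : ℕ) : ℝ) * L ≤ Real.log (1 / u) := by
    rw [hL, ← log_one_div_pow]
    exact Real.log_le_log (by positivity) (one_div_le_one_div_of_le hu0 hm2)
  have hlog2 : Real.log ((n + 1 : ℕ) * L) ≤ Real.log (Real.log (1 / u)) :=
    Real.log_le_log (by positivity) hlog
  refine mul_le_mul_of_nonneg_left (Real.sqrt_le_sqrt ?_) (by positivity)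
  calc 2 * q ^ (n + 2) * Real.log ((n + 1 : ℕ) * L)
      ≤ 2 * q ^ (n + 2) * Real.log (Real.log (1 / u)) := by gcongr
    _ ≤ 2 * u * Real.log (Real.log (1 / u)) := by gcongr

/-- Lower bound for the Gaussian tail, obtained by integrating the density over one standard
deviation only. -/
lemma _root_.gaussianReal_Ici_ge {σ x : ℝ} (hσ : 0 < σ) (hx : 0 ≤ x) :
    ENNReal.ofReal ((Real.sqrt (2 * Real.pi))⁻¹ * Real.exp (-((x + 1) ^ 2 / 2))) ≤
      gaussianReal 0 (Real.toNNReal (σ ^ 2)) (Ici (σ * x)) := by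
  have hmap : gaussianReal 0 (Real.toNNReal (σ ^ 2)) = (gaussianReal 0 1).map (σ * ·) := by
    rw [gaussianReal_map_const_mul, mul_zero, mul_one, Real.toNNReal_of_nonneg (sq_nonneg σ)]
  rw [hmap, Measure.map_apply (measurable_const_mul σ) measurableSet_Ici]
  have hsub : Icc x (x + 1) ⊆ (σ * ·) ⁻¹' Ici (σ * x) := fun y hy =>
    mul_le_mul_of_nonneg_left hy.1 hσ.le
  refine le_trans ?_ (measure_mono hsub)
  rw [gaussianReal_apply _ one_ne_zero]
  calc _ = ∫⁻ _ in Icc x (x + 1),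
        ENNReal.ofReal ((Real.sqrt (2 * Real.pi))⁻¹ * Real.exp (-((x + 1) ^ 2 / 2))) := by
        simp
    _ ≤ _ := by
      refine setLIntegral_mono' measurableSet_Icc fun y hy => ?_
      rw [gaussianPDF_def, gaussianPDFReal_def]
      refine ENNReal.ofReal_le_ofReal ?_
      have h1 : (y - 0) ^ 2 ≤ (x + 1) ^ 2 := by
        have := hy.1; have := hy.2
        apply pow_le_pow_left₀ <;> linarith
      simp only [NNReal.coe_one, mul_one]
      gcongr
      rw [neg_div]
      gcongr

/-- Events about the increments `W (q^n) - W (q^(n+1))` are independent: the increment with the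
smallest index is independent of the path up to time `q^(n+1)`, which determines all others. -/
lemma iIndepSet_incr [IsProbabilityMeasure P] (hW : IsBrownianMotion P W) {q : ℝ} (hq0 : 0 < q)
    (hq1 : q < 1) (b : ℕ → ℝ) :
    iIndepSet (fun n : ℕ => {ω | b n ≤ W (q ^ n) ω - W (q ^ (n + 1)) ω}) P := by
  rw [iIndepSet_iff_meas_biInter
    fun n => measurableSet_le measurable_const (hW.meas_incr _ _)]
  intro s
  induction s using Finset.induction_on_min with
  | empty => simp
  | insert n s hs ih =>
    rw [Finset.set_biInter_insert, Finset.prod_insert fun h => lt_irrefl _ (hs n h), ← ih]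
    refine (Indep_iff _ _ _).1 (hW.indep_incr (q ^ (n + 1)) (q ^ n) (by positivity)
      (pow_le_pow_of_le_one hq0.le hq1.le (Nat.le_succ n))) _ _ ?_ ?_
    · exact (comap_measurable (fun ω => W (q ^ n) ω - W (q ^ (n + 1)) ω)) measurableSet_Ici
    · refine Finset.measurableSet_biInter s fun m hm => ?_
      have hnm : n + 1 ≤ m := hs m hm
      have h1 := measurable_pastSigma W (pow_le_pow_of_le_one hq0.le hq1.le hnm)
      have h2 := measurable_pastSigma W
        (pow_le_pow_of_le_one hq0.le hq1.le (show n + 1 ≤ m + 1 by omega))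
      exact (h1.sub h2) (measurableSet_Ici (a := b m))

/-- Second Borel–Cantelli lemma for the increments over `[q^(n+1), q^n]`: for `c < 1` the tail
probabilities are eventually at least a constant multiple of `1 / n`. -/
lemma frequently_incr [IsProbabilityMeasure P] (hW : IsBrownianMotion P W) {q c : ℝ}
    (hq0 : 0 < q) (hq1 : q < 1) (hc0 : 0 ≤ c) (hc1 : c < 1) :
    ∀ᵐ ω ∂P, ∃ᶠ n : ℕ in atTop,
      c * Real.sqrt (1 - q) * lilScale (q ^ n) ≤ W (q ^ n) ω - W (q ^ (n + 1)) ω := by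
  set E : ℕ → Set Ω := fun n =>
    {ω | c * Real.sqrt (1 - q) * lilScale (q ^ n) ≤ W (q ^ n) ω - W (q ^ (n + 1)) ω} with hE
  have hEm : ∀ n, MeasurableSet (E n) := fun n =>
    measurableSet_le measurable_const (hW.meas_incr _ _)
  have hind : iIndepSet E P := hW.iIndepSet_incr hq0 hq1 _
  set L : ℝ := Real.log (1 / q) with hL
  have hLpos : 0 < L := Real.log_pos (by rw [lt_div_iff₀ hq0]; linarith)
  set K : ℝ := (Real.sqrt (2 * Real.pi))⁻¹ with hK
  have hKpos : 0 < K := by positivity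
  have hll : Tendsto (fun n : ℕ => Real.log (Real.log (1 / q ^ n))) atTop atTop :=
    tendsto_logLog.comp (tendsto_pow_nhdsGT hq0 hq1)
  have hPE : ∀ᶠ n : ℕ in atTop, K * L⁻¹ * (n : ℝ)⁻¹ ≤ (P (E n)).toReal := by
    filter_upwards [hll.eventually_ge_atTop 0, hll.eventually_ge_atTop ((1 / (1 - c)) ^ 2 / 2),
      eventually_gt_atTop 0] with n hn0 hn1 hnpos
    set ℓ := Real.log (Real.log (1 / q ^ n)) with hℓ
    have hσ : 0 < Real.sqrt (q ^ n * (1 - q)) :=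
      Real.sqrt_pos.2 (mul_pos (pow_pos hq0 n) (by linarith))
    have h1c : 0 < 1 - c := by linarith
    have htail := gaussianReal_Ici_ge hσ (x := c * Real.sqrt (2 * ℓ)) (by positivity)
    have heq : Real.sqrt (q ^ n * (1 - q)) * (c * Real.sqrt (2 * ℓ)) =
        c * Real.sqrt (1 - q) * lilScale (q ^ n) := by
      rw [lilScale, ← hℓ, show 2 * q ^ n * ℓ = q ^ n * (2 * ℓ) by ring,
        Real.sqrt_mul (pow_pos hq0 n).le, Real.sqrt_mul (pow_pos hq0 n).le]
      ring
    rw [Real.sq_sqrt (mul_pos (pow_pos hq0 n) (by linarith : (0:ℝ) < 1 - q)).le,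
      show q ^ n * (1 - q) = q ^ n - q ^ (n + 1) by ring,
      ← hW.gaussian_incr (q ^ (n + 1)) (q ^ n) (by positivity)
      (pow_le_pow_of_le_one hq0.le hq1.le (Nat.le_succ n)),
      Measure.map_apply (hW.meas_incr _ _) measurableSet_Ici,
      ← show q ^ n * (1 - q) = q ^ n - q ^ (n + 1) by ring, heq] at htail
    have htail' : ENNReal.ofReal (K * Real.exp (-((c * Real.sqrt (2 * ℓ) + 1) ^ 2 / 2)))
        ≤ P (E n) := htail
    rw [ENNReal.ofReal_le_iff_le_toReal (measure_ne_top _ _)] at htail'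
    refine le_trans ?_ htail'
    have hy : 1 / (1 - c) ≤ Real.sqrt (2 * ℓ) := Real.le_sqrt_of_sq_le (by linarith)
    have hy2 : c * Real.sqrt (2 * ℓ) + 1 ≤ Real.sqrt (2 * ℓ) := by
      rw [div_le_iff₀ h1c] at hy; linarith
    have hy3 : (c * Real.sqrt (2 * ℓ) + 1) ^ 2 / 2 ≤ ℓ := by
      have := pow_le_pow_left₀ (by positivity) hy2 2
      rw [Real.sq_sqrt (by positivity)] at this
      linarith
    have hexp : Real.exp (-ℓ) = L⁻¹ * (n : ℝ)⁻¹ := by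
      rw [hℓ, log_one_div_pow, Real.exp_neg, Real.exp_log (by positivity), mul_inv, mul_comm]
    rw [mul_assoc, ← hexp]
    gcongr
  have hsum : ∑' n, P (E n) = ⊤ := by
    by_contra hne
    have hs : Summable fun n => (P (E n)).toReal := ENNReal.summable_toReal hne
    have hs2 : Summable fun n : ℕ => K * L⁻¹ * (n : ℝ)⁻¹ := by
      refine hs.of_norm_bounded_eventually_nat ?_
      filter_upwards [hPE] with n hn
      rwa [Real.norm_of_nonneg (by positivity)]
    rw [summable_mul_left_iff (by positivity)] at hs2
    exact Real.not_summable_natCast_inv hs2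
  have hone := measure_limsup_eq_one hEm hind hsum
  have hae := (mem_ae_iff_prob_eq_one (MeasurableSet.measurableSet_limsup hEm)).2 hone
  filter_upwards [hae] with ω hω
  exact mem_limsup_iff_frequently_mem.1 hω

/-- Lower half of the law of the iterated logarithm. For small `q` the increment over
`[q^(n+1), q^n]` almost reaches `lilScale (q^n)` infinitely often, and `W (q^(n+1))` is
negligible by the upper half applied to `-W`. -/
lemma lil_lower [IsProbabilityMeasure P] (hW : IsBrownianMotion P W) {ε : ℝ} (hε : 0 < ε)
    (hε1 : ε < 1) :
    ∀ᵐ ω ∂P, ∃ᶠ u in nhdsWithin 0 (Ioi 0), (1 - ε) * lilScale u ≤ W u ω := by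
  obtain ⟨q, ⟨hq0, hq1⟩, hq⟩ : ∃ q : ℝ, q ∈ Ioo (0 : ℝ) 1 ∧
      1 - ε < (1 - ε / 2) * Real.sqrt (1 - q) - 4 * Real.sqrt q := by
    have hcont : Continuous fun q : ℝ => (1 - ε / 2) * Real.sqrt (1 - q) - 4 * Real.sqrt q := by
      fun_prop
    have h1 : ∀ᶠ q : ℝ in nhdsWithin 0 (Ioi 0),
        1 - ε < (1 - ε / 2) * Real.sqrt (1 - q) - 4 * Real.sqrt q :=
      ((hcont.tendsto 0).mono_left nhdsWithin_le_nhds).eventually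
        (lt_mem_nhds (by simp; linarith))
    have h2 : ∀ᶠ q : ℝ in nhdsWithin 0 (Ioi 0), q ∈ Ioo (0 : ℝ) 1 := Ioo_mem_nhdsGT one_pos
    exact (h2.and h1).exists
  set L : ℝ := Real.log (1 / q) with hL
  have hLpos : 0 < L := Real.log_pos (by rw [lt_div_iff₀ hq0]; linarith)
  filter_upwards [hW.frequently_incr hq0 hq1 (c := 1 - ε / 2) (by linarith) (by linarith),
    hW.neg.lil_upper one_pos] with ω hfreq hup
  have hpow := tendsto_pow_nhdsGT hq0 hq1
  refine hpow.frequently ?_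
  have hpow1 := hpow.comp (tendsto_add_atTop_nat 1)
  have hnL : Tendsto (fun n : ℕ => (n : ℝ) * L) atTop atTop :=
    tendsto_natCast_atTop_atTop.atTop_mul_const hLpos
  refine (hfreq.and_eventually ((hpow1.eventually hup).and
    ((hnL.eventually_ge_atTop 2).and (eventually_ge_atTop 1)))).mono ?_
  rintro n ⟨h1, h2, h3, h4⟩
  simp only [Function.comp] at h2
  have h4' : (1 : ℝ) ≤ n := by exact_mod_cast h4
  have hscale : lilScale (q ^ (n + 1)) ≤ 2 * Real.sqrt q * lilScale (q ^ n) := by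
    rw [lilScale, lilScale, log_one_div_pow, log_one_div_pow, ← hL]
    have hl0 : 0 ≤ Real.log (n * L) := Real.log_nonneg (by linarith)
    -- `(n + 1) L ≤ 2 n L ≤ (n L)²`
    have hl : Real.log ((n + 1 : ℕ) * L) ≤ 2 * Real.log (n * L) := by
      have : Real.log ((n + 1 : ℕ) * L) ≤ Real.log ((n * L) ^ 2) := by
        refine Real.log_le_log (by positivity) ?_
        push_cast
        nlinarith
      rwa [Real.log_pow] at this
    refine Real.sqrt_le_iff.2 ⟨by positivity, ?_⟩
    rw [mul_pow, mul_pow, Real.sq_sqrt hq0.le, Real.sq_sqrt (by positivity)]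
    calc 2 * q ^ (n + 1) * Real.log ((n + 1 : ℕ) * L)
        ≤ 2 * q ^ (n + 1) * (2 * Real.log (n * L)) := by gcongr
      _ ≤ 2 * q ^ (n + 1) * (4 * Real.log (n * L)) := by gcongr; norm_num
      _ = _ := by ring
  have hs := lilScale_nonneg (q ^ n)
  calc (1 - ε) * lilScale (q ^ n)
      ≤ ((1 - ε / 2) * Real.sqrt (1 - q) - 4 * Real.sqrt q) * lilScale (q ^ n) := by gcongr
    _ ≤ W (q ^ n) ω := by linarith

end IsBrownianMotion

/-! ### Passing to the perturbed process -/

lemma limsup_eq_one_of_bounds {f : ℝ → ℝ} {l : Filter ℝ} [l.NeBot]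
    (hup : ∀ ε > 0, ∀ᶠ u in l, f u ≤ 1 + ε) (hlo : ∀ ε > 0, ∃ᶠ u in l, 1 - ε ≤ f u)
    (hbd : ∀ᶠ u in l, -2 ≤ f u) : limsup f l = 1 := by
  have hB : l.IsBoundedUnder (· ≤ ·) f := ⟨2, by
    simpa [eventually_map, one_add_one_eq_two] using hup 1 one_pos⟩
  have hC : l.IsBoundedUnder (· ≥ ·) f := ⟨-2, by simpa [eventually_map] using hbd⟩
  refine le_antisymm ?_ ?_
  · exact le_of_forall_pos_le_add fun ε hε => limsup_le_of_le hC.isCoboundedUnder_le (hup ε hε)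
  · refine le_of_forall_pos_le_add fun ε hε => ?_
    have := le_limsup_of_frequently_le (hlo ε hε) hB
    linarith

lemma liminf_eq_neg_one_of_bounds {f : ℝ → ℝ} {l : Filter ℝ} [l.NeBot]
    (hlo : ∀ ε > 0, ∀ᶠ u in l, -1 - ε ≤ f u) (hup : ∀ ε > 0, ∃ᶠ u in l, f u ≤ -1 + ε)
    (hbd : ∀ᶠ u in l, f u ≤ 2) : liminf f l = -1 := by
  have hB : l.IsBoundedUnder (· ≤ ·) f := ⟨2, by simpa [eventually_map] using hbd⟩
  have hC : l.IsBoundedUnder (· ≥ ·) f := ⟨-1 - 1, by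
    simpa only [eventually_map] using hlo 1 one_pos⟩
  refine le_antisymm ?_ ?_
  · exact le_of_forall_pos_le_add fun ε hε => liminf_le_of_frequently_le (hup ε hε) hC
  · refine le_of_forall_pos_le_add fun ε hε => ?_
    have := le_liminf_of_le hB.isCoboundedUnder_ge (hlo ε hε)
    linarith

lemma sqrt_le_lilScale : ∀ᶠ u : ℝ in nhdsWithin 0 (Ioi 0), Real.sqrt u ≤ lilScale u := by
  filter_upwards [tendsto_logLog.eventually_ge_atTop 1, self_mem_nhdsWithin] with u hl hu
  have hu0 : (0 : ℝ) < u := hu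
  refine Real.sqrt_le_sqrt ?_
  nlinarith

/-- A perturbation of size `O(u)` does not affect the law of the iterated logarithm, because
`u = o(√u)` and `√u ≤ lilScale u` near `0`. -/
lemma lil_of_perturbation {w y : ℝ → ℝ} {C : ℝ}
    (hy : ∀ᶠ u in nhdsWithin 0 (Ioi 0), |y u - w u| ≤ C * u)
    (hup : ∀ ε > 0, ∀ᶠ u in nhdsWithin 0 (Ioi 0), w u ≤ (1 + ε) * lilScale u)
    (hlo : ∀ ε > 0, ε < 1 → ∃ᶠ u in nhdsWithin 0 (Ioi 0), (1 - ε) * lilScale u ≤ w u) :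
    (∀ ε > 0, ∀ᶠ u in nhdsWithin 0 (Ioi 0), y u / lilScale u ≤ 1 + ε) ∧
      ∀ ε > 0, ∃ᶠ u in nhdsWithin 0 (Ioi 0), 1 - ε ≤ y u / lilScale u := by
  have hsmall : ∀ ε > 0, ∀ᶠ u in nhdsWithin 0 (Ioi 0),
      0 < lilScale u ∧ |y u - w u| ≤ ε * lilScale u := by
    intro ε hε
    have hlim : Tendsto (fun u : ℝ => C * Real.sqrt u) (nhdsWithin 0 (Ioi 0)) (nhds 0) := by
      have : Continuous fun u : ℝ => C * Real.sqrt u := by fun_prop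
      simpa using (this.tendsto 0).mono_left nhdsWithin_le_nhds
    filter_upwards [hy, sqrt_le_lilScale, hlim.eventually (gt_mem_nhds hε), self_mem_nhdsWithin]
      with u h1 h2 h3 hu
    have hs : 0 < Real.sqrt u := Real.sqrt_pos.2 hu
    refine ⟨hs.trans_le h2, h1.trans ?_⟩
    calc C * u = (C * Real.sqrt u) * Real.sqrt u := by
          rw [mul_assoc, Real.mul_self_sqrt (le_of_lt hu)]
      _ ≤ ε * Real.sqrt u := by gcongr
      _ ≤ ε * lilScale u := by gcongr
  constructor
  · intro ε hε
    filter_upwards [hsmall (ε / 2) (half_pos hε), hup (ε / 2) (half_pos hε)] with u ⟨h0, h1⟩ h2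
    rw [div_le_iff₀ h0]
    have := (abs_le.1 h1).2
    linarith
  · intro ε hε
    have hδ : 0 < min (ε / 2) (1 / 2) := by positivity
    refine ((hlo _ hδ ((min_le_right _ _).trans_lt (by norm_num))).and_eventually
      (hsmall (ε / 2) (half_pos hε))).mono ?_
    rintro u ⟨h2, h0, h1⟩
    rw [le_div_iff₀ h0]
    have := (abs_le.1 h1).1
    have := mul_le_mul_of_nonneg_right (min_le_left (ε / 2) (1 / 2)) h0.le
    linarith

namespace IsBrownianMotion

/-- Both halves of the law of the iterated logarithm, with one null set for all `ε`. -/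
lemma lil {Ω : Type*} [MeasurableSpace Ω] {P : Measure Ω} {W : ℝ → Ω → ℝ}
    [IsProbabilityMeasure P] (hW : IsBrownianMotion P W) :
    ∀ᵐ ω ∂P, (∀ ε > 0, ∀ᶠ u in nhdsWithin 0 (Ioi 0), W u ω ≤ (1 + ε) * lilScale u) ∧
      ∀ ε > 0, ε < 1 → ∃ᶠ u in nhdsWithin 0 (Ioi 0), (1 - ε) * lilScale u ≤ W u ω := by
  have h1 : ∀ᵐ ω ∂P, ∀ k : ℕ, ∀ᶠ u in nhdsWithin 0 (Ioi 0),
      W u ω ≤ (1 + 1 / ((k : ℝ) + 2)) * lilScale u :=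
    ae_all_iff.2 fun k => hW.lil_upper (by positivity)
  have h2 : ∀ᵐ ω ∂P, ∀ k : ℕ, ∃ᶠ u in nhdsWithin 0 (Ioi 0),
      (1 - 1 / ((k : ℝ) + 2)) * lilScale u ≤ W u ω :=
    ae_all_iff.2 fun k => hW.lil_lower (by positivity) (by
      rw [div_lt_one (by positivity)]
      have : (0 : ℝ) ≤ k := by positivity
      linarith)
  have hk : ∀ ε > (0 : ℝ), ∃ k : ℕ, 1 / ((k : ℝ) + 2) ≤ ε := fun ε hε => by
    obtain ⟨k, hk⟩ := exists_nat_one_div_lt hε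
    refine ⟨k, le_trans ?_ hk.le⟩
    gcongr
    norm_num
  filter_upwards [h1, h2] with ω h1 h2
  refine ⟨fun ε hε => ?_, fun ε hε _ => ?_⟩
  · obtain ⟨k, hk⟩ := hk ε hε
    filter_upwards [h1 k] with u hu
    have := lilScale_nonneg u
    exact hu.trans (by gcongr)
  · obtain ⟨k, hk⟩ := hk ε hε
    refine (h2 k).mono fun u hu => le_trans ?_ hu
    have := lilScale_nonneg u
    gcongr

end IsBrownianMotion

/-- Law of the iterated logarithm for the time-dependent
Ornstein–Uhlenbeck process (Lemma 3.2): for all `(t,x) ∈ [0,T)×ℝ`, almost surely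
`limsup_{u↓0} (X^{t,x}_u − x)/√(2u ln ln(1/u)) = 1` and
`liminf_{u↓0} (X^{t,x}_u − x)/√(2u ln ln(1/u)) = −1`. -/
theorem stmt_7 {Ω : Type*} [MeasurableSpace Ω] (P : Measure Ω) [IsProbabilityMeasure P]
    (W : ℝ → Ω → ℝ) (hW : IsBrownianMotion P W)
    (T : ℝ) (hT : 0 < T) (θ α : ℝ → ℝ)
    (hθ : ContDiffOn ℝ 1 θ (Icc 0 T)) (hα : ContDiffOn ℝ 1 α (Icc 0 T))
    (hθpos : ∀ s ∈ Icc (0:ℝ) T, 0 < θ s)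
    (X : ℝ → ℝ → ℝ → Ω → ℝ)
    (hXmeas : ∀ t x s, Measurable (X t x s))
    (hX : ∀ t ∈ Icc (0:ℝ) T, ∀ x : ℝ, ∀ᵐ ω ∂P,
      ContinuousOn (fun s => X t x s ω) (Icc 0 (T - t)) ∧
      ∀ s ∈ Icc (0:ℝ) (T - t),
        X t x s ω = x + (∫ u in (0:ℝ)..s, θ (t + u) * (α (t + u) - X t x u ω)) + W s ω)
    :
    ∀ t ∈ Ico (0:ℝ) T, ∀ x : ℝ, ∀ᵐ ω ∂P,
      Filter.limsup
          (fun u => (X t x u ω - x) / Real.sqrt (2 * u * Real.log (Real.log (1 / u))))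
          (nhdsWithin 0 (Ioi 0)) = 1 ∧
      Filter.liminf
          (fun u => (X t x u ω - x) / Real.sqrt (2 * u * Real.log (Real.log (1 / u))))
          (nhdsWithin 0 (Ioi 0)) = -1 := by
  intro t ht x
  filter_upwards [hX t ⟨ht.1, ht.2.le⟩ x, hW.lil, hW.neg.lil] with ω ⟨hXc, hXeq⟩ hl hl'
  have hTt : 0 < T - t := sub_pos.2 ht.2
  have hmaps : MapsTo (fun u : ℝ => t + u) (Icc 0 (T - t)) (Icc 0 T) := fun u hu =>
    ⟨by linarith [ht.1, hu.1], by linarith [hu.2]⟩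
  have hshift : ContinuousOn (fun u : ℝ => t + u) (Icc 0 (T - t)) := by fun_prop
  have hφ : ContinuousOn (fun u => θ (t + u) * (α (t + u) - X t x u ω)) (Icc 0 (T - t)) :=
    (hθ.continuousOn.comp hshift hmaps).mul ((hα.continuousOn.comp hshift hmaps).sub hXc)
  obtain ⟨C, hC⟩ := isCompact_Icc.exists_bound_of_continuousOn hφ
  have hdrift : ∀ᶠ u in nhdsWithin 0 (Ioi 0), |(X t x u ω - x) - W u ω| ≤ C * u := by
    filter_upwards [Ioo_mem_nhdsGT hTt] with u hu
    have hb : ‖∫ v in (0:ℝ)..u, θ (t + v) * (α (t + v) - X t x v ω)‖ ≤ C * |u - 0| := by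
      refine intervalIntegral.norm_integral_le_of_norm_le_const fun v hv => hC v ?_
      rw [uIoc_of_le hu.1.le] at hv
      exact ⟨hv.1.le, hv.2.trans hu.2.le⟩
    rw [sub_zero, abs_of_pos hu.1, Real.norm_eq_abs] at hb
    rw [hXeq u ⟨hu.1.le, hu.2.le⟩]
    convert hb using 2
    ring
  obtain ⟨hup, hlo⟩ := lil_of_perturbation hdrift hl.1 hl.2
  obtain ⟨hup', hlo'⟩ := lil_of_perturbation (y := fun u => -(X t x u ω - x))
    (hdrift.mono fun u hu => by
      rwa [show -(X t x u ω - x) - -W u ω = -((X t x u ω - x) - W u ω) by ring, abs_neg])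
    hl'.1 hl'.2
  simp only [neg_div] at hup' hlo'
  refine ⟨limsup_eq_one_of_bounds hup hlo ?_, liminf_eq_neg_one_of_bounds ?_ ?_ ?_⟩
  · filter_upwards [hup' 1 one_pos] with u hu
    change -2 ≤ (X t x u ω - x) / lilScale u
    linarith
  · intro ε hε
    filter_upwards [hup' ε hε] with u hu
    change -1 - ε ≤ (X t x u ω - x) / lilScale u
    linarith
  · intro ε hε
    refine (hlo' ε hε).mono fun u hu => ?_
    change (X t x u ω - x) / lilScale u ≤ -1 + ε
    linarith
  · filter_upwards [hup 1 one_pos] with u hu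
    change (X t x u ω - x) / lilScale u ≤ 2
    linarith
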